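/- arXiv:1411.1652 — 4 statements merged into one kernel-verified Lean document; each statement's English description precedes it below -/
import Mathlib

section
/- Let G be a connected simple graph on n ≥ 2 vertices with Laplacian L and Moore–Penrose pseudoinverse B of L, and set f = max_i B_{ii}. Suppose x : V → ℕ and d : V → ℤ satisfy L x = d, x_k = 0 for some vertex k, and ∑_i |d_i| ≤ 2N for a real number N ≥ 0. Then s := ∑_i x_i satisfies s ≤ 2·n·N·f. -/
open Matrix

/-!
On a connected graph the kernel of `L` is the space of constant vectors. Hence `x - B L x`, which
lies in that kernel, is constant, and since `B L x` is orthogonal to the kernel, the constant is the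
mean of `x`. At a vertex `k` with `x k = 0` this reads `∑ i, x i = -n (B d) k`. The pseudoinverse of
a positive semidefinite matrix is positive semidefinite, so no entry of `B` exceeds `f` in absolute
value, and `|(B d) k| ≤ f ∑ i, |d i|`.
-/

section MoorePenrose

variable {m n R : Type*} [Fintype m] [Fintype n]

/-- `B` is the Moore–Penrose inverse of `A`, expressed as a predicate by the four Penrose
equations; over a ring with trivial star, `Hermitian` means symmetric. -/
structure IsMoorePenroseInverse [NonUnitalSemiring R] [StarRing R]
    (A : Matrix m n R) (B : Matrix n m R) : Prop where
  mul_mul_self : A * B * A = A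
  mul_mul_inverse : B * A * B = B
  isHermitian_mul_inverse : (A * B).IsHermitian
  isHermitian_inverse_mul : (B * A).IsHermitian

namespace IsMoorePenroseInverse

section Unique

variable [NonUnitalSemiring R] [StarRing R] {A : Matrix m n R} {B C : Matrix n m R}

lemma conjTranspose (h : IsMoorePenroseInverse A B) : IsMoorePenroseInverse Aᴴ Bᴴ where
  mul_mul_self := by
    simpa only [conjTranspose_mul, Matrix.mul_assoc] using congrArg (·ᴴ) h.mul_mul_self
  mul_mul_inverse := by
    simpa only [conjTranspose_mul, Matrix.mul_assoc] using congrArg (·ᴴ) h.mul_mul_inverse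
  isHermitian_mul_inverse := by
    simpa only [conjTranspose_mul] using h.isHermitian_inverse_mul.conjTranspose
  isHermitian_inverse_mul := by
    simpa only [conjTranspose_mul] using h.isHermitian_mul_inverse.conjTranspose

lemma mul_inverse_eq (hB : IsMoorePenroseInverse A B) (hC : IsMoorePenroseInverse A C) :
    A * B = A * C :=
  calc A * B = (A * C) * (A * B) := by rw [← Matrix.mul_assoc, hC.mul_mul_self]
    _ = ((A * B) * (A * C))ᴴ := by
      rw [conjTranspose_mul (A * B), hB.isHermitian_mul_inverse.eq, hC.isHermitian_mul_inverse.eq]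
    _ = (A * C)ᴴ := by rw [← Matrix.mul_assoc, hB.mul_mul_self]
    _ = A * C := hC.isHermitian_mul_inverse.eq

lemma inverse_mul_eq (hB : IsMoorePenroseInverse A B) (hC : IsMoorePenroseInverse A C) :
    B * A = C * A :=
  conjTranspose_injective <| by
    simpa only [conjTranspose_mul] using hB.conjTranspose.mul_inverse_eq hC.conjTranspose

lemma unique (hB : IsMoorePenroseInverse A B) (hC : IsMoorePenroseInverse A C) : B = C :=
  calc B = B * A * B := hB.mul_mul_inverse.symm
    _ = C * A * C := by
      rw [hB.inverse_mul_eq hC, Matrix.mul_assoc, hB.mul_inverse_eq hC, Matrix.mul_assoc]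
    _ = C := hC.mul_mul_inverse

lemma isHermitian {A B : Matrix n n R} (h : IsMoorePenroseInverse A B) (hA : A.IsHermitian) :
    B.IsHermitian :=
  unique (hA.eq ▸ h.conjTranspose) h

end Unique

lemma posSemidef [Ring R] [PartialOrder R] [StarRing R] {A B : Matrix n n R}
    (h : IsMoorePenroseInverse A B) (hA : A.PosSemidef) : B.PosSemidef := by
  have congruence : Bᴴ * A * B = B := by rw [(h.isHermitian hA.isHermitian).eq, h.mul_mul_inverse]
  exact congruence ▸ hA.conjTranspose_mul_mul_same B

section Kernel

variable [Ring R] [StarRing R] {A : Matrix m n R} {B : Matrix n m R}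

lemma mulVec_sub_eq_zero (h : IsMoorePenroseInverse A B) (x : n → R) :
    A *ᵥ (x - B *ᵥ (A *ᵥ x)) = 0 := by
  rw [mulVec_sub, mulVec_mulVec, mulVec_mulVec, h.mul_mul_self, sub_self]

lemma star_dotProduct_mulVec_eq_zero (h : IsMoorePenroseInverse A B) {w : n → R}
    (hw : A *ᵥ w = 0) (x : n → R) : star w ⬝ᵥ (B *ᵥ (A *ᵥ x)) = 0 := by
  have annihilates : star w ᵥ* (B * A) = 0 := by
    rw [← h.isHermitian_inverse_mul.eq, ← star_mulVec, ← mulVec_mulVec, hw, mulVec_zero, star_zero]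
  rw [mulVec_mulVec, dotProduct_mulVec, annihilates, zero_dotProduct]

lemma sum_eq_card_mul (h : IsMoorePenroseInverse A B)
    (hker : ∀ v, A *ᵥ v = 0 ↔ ∀ i j, v i = v j) (x : n → R) (k : n) :
    ∑ i, x i = Fintype.card n * (x k - (B *ᵥ (A *ᵥ x)) k) := by
  have sum_zero : ∑ i, (B *ᵥ (A *ᵥ x)) i = 0 := by
    simpa [dotProduct] using h.star_dotProduct_mulVec_eq_zero ((hker 1).2 fun _ _ => rfl) x
  have const : ∀ i, x i - (B *ᵥ (A *ᵥ x)) i = x k - (B *ᵥ (A *ᵥ x)) k :=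
    fun i => (hker _).1 (h.mulVec_sub_eq_zero x) i k
  calc ∑ i, x i = ∑ i, (x i - (B *ᵥ (A *ᵥ x)) i) := by
        rw [Finset.sum_sub_distrib, sum_zero, sub_zero]
    _ = Fintype.card n * (x k - (B *ᵥ (A *ᵥ x)) k) := by
        simp only [const, Finset.sum_const, Finset.card_univ, nsmul_eq_mul]

end Kernel

end IsMoorePenroseInverse

end MoorePenrose

lemma two_mul_abs_apply_le_of_posSemidef {n R : Type*} [CommRing R] [LinearOrder R]
    [IsStrictOrderedRing R] [StarRing R] [TrivialStar R] {B : Matrix n n R} (hB : B.PosSemidef)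
    (i j : n) : 2 * |B i j| ≤ B i i + B j j := by
  have symm : B j i = B i j := by simpa using hB.isHermitian.apply i j
  have form_add := (hB.submatrix ![i, j]).dotProduct_mulVec_nonneg ![1, 1]
  have form_sub := (hB.submatrix ![i, j]).dotProduct_mulVec_nonneg ![1, -1]
  simp only [star_trivial, dotProduct, mulVec, Fin.sum_univ_two, submatrix_apply, cons_val_zero,
    cons_val_one, symm] at form_add form_sub
  cases abs_cases (B i j) <;> linarith

lemma abs_dotProduct_le_mul_sum_abs {n R : Type*} [Fintype n] [Ring R] [LinearOrder R]
    [IsOrderedRing R] {v : n → R} {c : R} (hv : ∀ i, |v i| ≤ c) (w : n → R) :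
    |v ⬝ᵥ w| ≤ c * ∑ i, |w i| :=
  calc |v ⬝ᵥ w| ≤ ∑ i, |v i * w i| := Finset.abs_sum_le_sum_abs _ _
    _ ≤ ∑ i, c * |w i| := Finset.sum_le_sum fun i _ => by
      rw [abs_mul]
      exact mul_le_mul_of_nonneg_right (hv i) (abs_nonneg _)
    _ = c * ∑ i, |w i| := (Finset.mul_sum _ _ _).symm

section Laplacian

variable {V : Type*} [Fintype V] [DecidableEq V] (G : SimpleGraph V) [DecidableRel G.Adj]

variable {G} in
lemma lapMatrix_mulVec_eq_zero_iff_of_connected (hG : G.Connected) (v : V → ℝ) :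
    G.lapMatrix ℝ *ᵥ v = 0 ↔ ∀ i j, v i = v j := by
  simp only [G.lapMatrix_mulVec_eq_zero_iff_forall_reachable, hG.preconnected _ _, true_imp_iff]

lemma lapMatrix_mulVec_intCast {R : Type*} [Ring R] (x : V → ℤ) (i : V) :
    (G.lapMatrix R *ᵥ fun j => (x j : R)) i = ((G.lapMatrix ℤ *ᵥ x) i : ℤ) := by
  simp only [SimpleGraph.lapMatrix_mulVec_apply, Int.cast_sub, Int.cast_mul, Int.cast_natCast,
    Int.cast_sum]

end Laplacian

/-- `L` is an abstract Laplacian, for instance of a weighted graph, with `hker` in the role of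
connectedness; subtracting `card V * x k` replaces the normalisation `x k = 0`. -/
theorem chipFiring_duration_le_two_n_N_f_general {V R : Type*} [Fintype V] [CommRing R]
    [LinearOrder R] [IsStrictOrderedRing R] [StarRing R] [TrivialStar R] {L B : Matrix V V R}
    (hL : L.PosSemidef) (hker : ∀ v, L *ᵥ v = 0 ↔ ∀ i j, v i = v j)
    (hB : IsMoorePenroseInverse L B) {f : R} (hf : ∀ i, B i i ≤ f) (x : V → R) (k : V)
    {N : R} (hN : ∑ i, |(L *ᵥ x) i| ≤ 2 * N) :
    |∑ i, x i - Fintype.card V * x k| ≤ 2 * Fintype.card V * N * f := by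
  have hBpos : B.PosSemidef := hB.posSemidef hL
  have entry_le (j : V) : |B k j| ≤ f := by
    linarith [two_mul_abs_apply_le_of_posSemidef hBpos k j, hf k, hf j]
  have f_nonneg : 0 ≤ f := hBpos.diag_nonneg.trans (hf k)
  calc |∑ i, x i - Fintype.card V * x k|
      = Fintype.card V * |(B *ᵥ (L *ᵥ x)) k| := by
        rw [hB.sum_eq_card_mul hker x k, ← mul_sub, sub_sub_cancel_left, abs_mul, abs_neg,
          Nat.abs_cast]
    _ ≤ Fintype.card V * (f * ∑ i, |(L *ᵥ x) i|) := by
        gcongr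
        exact abs_dotProduct_le_mul_sum_abs entry_le _
    _ ≤ Fintype.card V * (f * (2 * N)) := by gcongr
    _ = 2 * Fintype.card V * N * f := by ring

/-- The duration `s = ∑ i, x i` of a terminating chip-firing game with `N` chips
on a connected graph `G` on `n ≥ 2` vertices satisfies `s ≤ 2 n N f`, where `f` is the
largest diagonal entry of the Moore–Penrose pseudoinverse `B` of the Laplacian of `G`. -/
theorem chipFiring_duration_le_two_n_N_f
    {n : ℕ} (hn : 2 ≤ n)
    (G : SimpleGraph (Fin n)) [DecidableRel G.Adj]
    (hG : G.Connected)
    (B : Matrix (Fin n) (Fin n) ℝ)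
    (hB1 : G.lapMatrix ℝ * B * G.lapMatrix ℝ = G.lapMatrix ℝ)
    (hB2 : B * G.lapMatrix ℝ * B = B)
    (hB3 : (G.lapMatrix ℝ * B)ᵀ = G.lapMatrix ℝ * B)
    (hB4 : (B * G.lapMatrix ℝ)ᵀ = B * G.lapMatrix ℝ)
    (f : ℝ)
    (hf : IsGreatest (Set.range fun i => B i i) f)
    (x : Fin n → ℕ) (d : Fin n → ℤ)
    (hLx : G.lapMatrix ℤ *ᵥ (fun i => (x i : ℤ)) = d)
    (k : Fin n) (hk : x k = 0)
    (N : ℝ) (hN0 : 0 ≤ N) (hN : (∑ i, |(d i : ℝ)|) ≤ 2 * N) :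
    ((∑ i, x i : ℕ) : ℝ) ≤ 2 * n * N * f := by
  simpa [hk] using (le_abs_self _).trans <| chipFiring_duration_le_two_n_N_f_general
    (G.posSemidef_lapMatrix ℝ) (lapMatrix_mulVec_eq_zero_iff_of_connected hG)
    ⟨hB1, hB2, hB3, hB4⟩ (fun i => hf.2 ⟨i, rfl⟩) (fun j => ((x j : ℤ) : ℝ)) k
    (by simpa only [lapMatrix_mulVec_intCast, hLx] using hN)
end

section
/- Let G be a connected vertex-transitive simple graph on n ≥ 2 vertices with Laplacian L and algebraic connectivity λ₂. Suppose x : V → ℕ and d : V → ℤ satisfy L x = d, x_k = 0 for some vertex k, and ∑_i |d_i| ≤ 2N for a real number N ≥ 0. Then s := ∑_i x_i satisfies s ≤ 2·(n−1)·N/λ₂. -/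
open Matrix

/-!
Let `y` be the firing vector minus its mean `s / n`, so that `L y = d` and `y k = -s / n`. As `y` is
orthogonal to the constants, which are the kernel of `L`, expanding it in an eigenbasis of `L` gives
`λ₂ ‖y‖₂ ≤ ‖d‖₂`. Two elementary facts about vectors with zero sum finish the proof: a single
coordinate of such a vector satisfies `n (y k)² ≤ (n - 1) ‖y‖₂²`, and `2 ‖d‖₂² ≤ ‖d‖₁² ≤ (2 N)²`.
Together they give `λ₂ s ≤ √(2 n (n - 1)) N`, and `n ≤ 2 (n - 1)`.
-/

section ZeroSum

variable {ι : Type*} [Fintype ι]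

lemma sum_erase_eq_neg_of_sum_eq_zero {M : Type*} [AddCommGroup M] [DecidableEq ι] {f : ι → M}
    (hf : ∑ i, f i = 0) (k : ι) : ∑ i ∈ Finset.univ.erase k, f i = -f k :=
  eq_neg_of_add_eq_zero_left ((Finset.sum_erase_add _ _ (Finset.mem_univ k)).trans hf)

variable {R : Type*} [CommRing R] [LinearOrder R] [IsStrictOrderedRing R]

/-- Samuelson's inequality. -/
lemma card_mul_sq_le_of_sum_eq_zero {y : ι → R} (hy : ∑ i, y i = 0) (k : ι) :
    (Fintype.card ι : R) * y k ^ 2 ≤ (Fintype.card ι - 1) * ∑ i, y i ^ 2 := by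
  classical
  have hcard : ((Finset.univ.erase k).card : R) = Fintype.card ι - 1 :=
    Finset.cast_card_erase_of_mem (Finset.mem_univ k)
  have hcs := sq_sum_le_card_mul_sum_sq (s := Finset.univ.erase k) (f := y)
  rw [sum_erase_eq_neg_of_sum_eq_zero hy k, hcard, neg_sq] at hcs
  rw [← Finset.sum_erase_add _ _ (Finset.mem_univ k)]
  linear_combination hcs

lemma two_mul_abs_le_sum_abs_of_sum_eq_zero {z : ι → R} (hz : ∑ i, z i = 0) (k : ι) :
    2 * |z k| ≤ ∑ i, |z i| := by
  classical
  have htri := Finset.abs_sum_le_sum_abs z (Finset.univ.erase k)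
  rw [sum_erase_eq_neg_of_sum_eq_zero hz k, abs_neg] at htri
  rw [← Finset.sum_erase_add _ _ (Finset.mem_univ k)]
  linear_combination htri

lemma two_mul_sum_sq_le_sq_sum_abs_of_sum_eq_zero {z : ι → R} (hz : ∑ i, z i = 0) :
    2 * ∑ i, z i ^ 2 ≤ (∑ i, |z i|) ^ 2 :=
  calc 2 * ∑ i, z i ^ 2 = ∑ i, 2 * |z i| * |z i| := by
        simp only [Finset.mul_sum, mul_assoc, abs_mul_abs_self, sq]
    _ ≤ ∑ i, (∑ j, |z j|) * |z i| := by
        gcongr with i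
        exact two_mul_abs_le_sum_abs_of_sum_eq_zero hz i
    _ = (∑ i, |z i|) ^ 2 := by rw [← Finset.mul_sum, sq]

end ZeroSum

section SpectralGap

lemma mul_norm_le_norm_apply_of_isSymmetric {𝕜 E : Type*} [RCLike 𝕜] [NormedAddCommGroup E]
    [InnerProductSpace 𝕜 E] [FiniteDimensional 𝕜 E] {T : E →ₗ[𝕜] E} (hT : T.IsSymmetric) {c : ℝ}
    (hc : ∀ μ : 𝕜, μ ≠ 0 → Module.End.HasEigenvalue T μ → c ≤ ‖μ‖) {y : E}
    (hy : y ∈ (LinearMap.ker T)ᗮ) : c * ‖y‖ ≤ ‖T y‖ := by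
  obtain hc0 | hc0 := le_total c 0
  · exact (mul_nonpos_of_nonpos_of_nonneg hc0 (norm_nonneg y)).trans (norm_nonneg _)
  let b := hT.eigenvectorBasis rfl
  have hcoord : ∀ i, c * ‖b.repr y i‖ ≤ ‖b.repr (T y) i‖ := by
    intro i
    rw [hT.eigenvectorBasis_apply_self_apply, norm_mul]
    by_cases hi : (hT.eigenvalues rfl i : 𝕜) = 0
    · have hker : b i ∈ LinearMap.ker T := by
        rw [LinearMap.mem_ker, hT.apply_eigenvectorBasis, hi, zero_smul]
      have hrepr : b.repr y i = 0 := by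
        rw [b.repr_apply_apply, hy _ hker]
      simp [b, hrepr]
    · gcongr
      exact hc _ hi (hT.hasEigenvalue_eigenvalues rfl i)
  refine le_of_sq_le_sq ?_ (norm_nonneg _)
  calc (c * ‖y‖) ^ 2 = ∑ i, (c * ‖b.repr y i‖) ^ 2 := by
        simp only [mul_pow, ← Finset.mul_sum, ← EuclideanSpace.norm_sq_eq, b.repr.norm_map]
    _ ≤ ∑ i, ‖b.repr (T y) i‖ ^ 2 := by
        gcongr with i
        exact hcoord i
    _ = ‖T y‖ ^ 2 := by rw [← EuclideanSpace.norm_sq_eq, b.repr.norm_map]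

lemma sq_mul_sum_sq_le_sum_sq_mulVec {ι : Type*} [Fintype ι] {A : Matrix ι ι ℝ}
    (hA : A.IsHermitian) {c : ℝ} (hc0 : 0 ≤ c)
    (hc : ∀ μ : ℝ, μ ≠ 0 → (∃ v : ι → ℝ, v ≠ 0 ∧ A *ᵥ v = μ • v) → c ≤ |μ|) {y : ι → ℝ}
    (hy : ∀ v, A *ᵥ v = 0 → y ⬝ᵥ v = 0) :
    c ^ 2 * ∑ i, y i ^ 2 ≤ ∑ i, (A *ᵥ y) i ^ 2 := by
  classical
  have hgap : ∀ μ : ℝ, μ ≠ 0 → Module.End.HasEigenvalue A.toEuclideanLin μ → c ≤ ‖μ‖ := by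
    intro μ hμ hev
    obtain ⟨v, hv⟩ := hev.exists_hasEigenvector
    exact hc μ hμ ⟨v.ofLp, by simpa using hv.2, congrArg WithLp.ofLp hv.apply_eq_smul⟩
  have horth : WithLp.toLp 2 y ∈ (LinearMap.ker A.toEuclideanLin)ᗮ := by
    intro v hv
    simpa [EuclideanSpace.inner_eq_star_dotProduct] using hy v.ofLp (congrArg WithLp.ofLp hv)
  have h := mul_norm_le_norm_apply_of_isSymmetric
    (Matrix.isSymmetric_toEuclideanLin_iff.mpr hA) hgap horth
  have hsq := pow_le_pow_left₀ (by positivity) h 2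
  simpa [mul_pow, EuclideanSpace.real_norm_sq_eq] using hsq

end SpectralGap

section Laplacian

variable {V : Type*} [Fintype V] [DecidableEq V] (G : SimpleGraph V) [DecidableRel G.Adj]

lemma sum_lapMatrix_mulVec {R : Type*} [CommRing R] (x : V → R) :
    ∑ i, (G.lapMatrix R *ᵥ x) i = 0 := by
  rw [← one_dotProduct, dotProduct_mulVec, ← mulVec_transpose, (G.isSymm_lapMatrix (R := R)).eq]
  exact (congrArg (· ⬝ᵥ x) G.lapMatrix_mulVec_const_eq_zero).trans (zero_dotProduct x)

lemma lapMatrix_mulVec_sub_const {R : Type*} [NonAssocRing R] (x : V → R) (c : R) :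
    G.lapMatrix R *ᵥ (fun i => x i - c) = G.lapMatrix R *ᵥ x := by
  ext i
  simp [SimpleGraph.lapMatrix_mulVec_apply, mul_sub]

lemma map_lapMatrix_mulVec {R S : Type*} [NonAssocRing R] [NonAssocRing S] (f : R →+* S) (x : V → R)
    (i : V) : (G.lapMatrix S *ᵥ fun j => f (x j)) i = f ((G.lapMatrix R *ᵥ x) i) := by
  simp [SimpleGraph.lapMatrix_mulVec_apply]

variable {G}

lemma dotProduct_eq_zero_of_lapMatrix_mulVec_eq_zero (hG : G.Connected) {y v : V → ℝ}
    (hy : ∑ i, y i = 0) (hv : G.lapMatrix ℝ *ᵥ v = 0) : y ⬝ᵥ v = 0 := by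
  obtain ⟨k⟩ := hG.nonempty
  have hconst : ∀ i, v i = v k := fun i =>
    G.lapMatrix_mulVec_eq_zero_iff_forall_reachable.mp hv i k (hG.preconnected i k)
  simp only [dotProduct, hconst, ← Finset.sum_mul, hy, zero_mul]

variable {lam : ℝ}

lemma sq_mul_sum_sq_le_sum_sq_lapMatrix_mulVec (hG : G.Connected) (hlam : 0 ≤ lam)
    (hgap : ∀ μ : ℝ, μ ≠ 0 → (∃ v : V → ℝ, v ≠ 0 ∧ G.lapMatrix ℝ *ᵥ v = μ • v) → lam ≤ μ)
    {y : V → ℝ} (hy : ∑ i, y i = 0) :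
    lam ^ 2 * ∑ i, y i ^ 2 ≤ ∑ i, (G.lapMatrix ℝ *ᵥ y) i ^ 2 :=
  sq_mul_sum_sq_le_sum_sq_mulVec (G.isHermitian_lapMatrix (R := ℝ)) hlam
    (fun μ hμ hv => (hgap μ hμ hv).trans (le_abs_self μ))
    fun _ => dotProduct_eq_zero_of_lapMatrix_mulVec_eq_zero hG hy

lemma two_mul_card_mul_sq_le_sq_sum_abs_lapMatrix_mulVec (hG : G.Connected) (hlam : 0 ≤ lam)
    (hgap : ∀ μ : ℝ, μ ≠ 0 → (∃ v : V → ℝ, v ≠ 0 ∧ G.lapMatrix ℝ *ᵥ v = μ • v) → lam ≤ μ)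
    {y : V → ℝ} (hy : ∑ i, y i = 0) (k : V) :
    2 * Fintype.card V * (lam * y k) ^ 2 ≤
      (Fintype.card V - 1) * (∑ i, |(G.lapMatrix ℝ *ᵥ y) i|) ^ 2 := by
  have hcard : (0 : ℝ) ≤ Fintype.card V - 1 :=
    sub_nonneg.mpr (Nat.one_le_cast.mpr (Fintype.card_pos_iff.mpr ⟨k⟩))
  have hsamuelson := card_mul_sq_le_of_sum_eq_zero hy k
  have hspectral := sq_mul_sum_sq_le_sum_sq_lapMatrix_mulVec hG hlam hgap hy
  have hnorms := two_mul_sum_sq_le_sq_sum_abs_of_sum_eq_zero (sum_lapMatrix_mulVec G y)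
  calc 2 * Fintype.card V * (lam * y k) ^ 2
      = 2 * lam ^ 2 * (Fintype.card V * y k ^ 2) := by ring
    _ ≤ 2 * lam ^ 2 * ((Fintype.card V - 1) * ∑ i, y i ^ 2) := by gcongr
    _ = (Fintype.card V - 1) * (2 * (lam ^ 2 * ∑ i, y i ^ 2)) := by ring
    _ ≤ (Fintype.card V - 1) * (2 * ∑ i, (G.lapMatrix ℝ *ᵥ y) i ^ 2) := by gcongr
    _ ≤ (Fintype.card V - 1) * (∑ i, |(G.lapMatrix ℝ *ᵥ y) i|) ^ 2 := by gcongr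

theorem chipFiring_duration_vertexTransitive_bound_general (hG : G.Connected) (hlam : 0 < lam)
    (hgap : ∀ μ : ℝ, μ ≠ 0 → (∃ v : V → ℝ, v ≠ 0 ∧ G.lapMatrix ℝ *ᵥ v = μ • v) → lam ≤ μ)
    {x : V → ℝ} {k : V} (hk : x k = 0) {N : ℝ} (hN : ∑ i, |(G.lapMatrix ℝ *ᵥ x) i| ≤ 2 * N) :
    |∑ i, x i| ≤ √(2 * Fintype.card V * (Fintype.card V - 1)) * N / lam := by
  set n : ℝ := (Fintype.card V : ℝ)
  set s := ∑ i, x i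
  have hn : 1 ≤ n := Nat.one_le_cast.mpr (Fintype.card_pos_iff.mpr ⟨k⟩)
  have : 0 ≤ n - 1 := sub_nonneg.mpr hn
  have hcentered : ∑ i, (x i - s / n) = 0 := by
    rw [Finset.sum_sub_distrib, Finset.sum_const, Finset.card_univ, nsmul_eq_mul,
      mul_div_cancel₀ _ (by positivity), sub_self]
  have hnorm : 0 ≤ ∑ i, |(G.lapMatrix ℝ *ᵥ x) i| := Finset.sum_nonneg fun _ _ => abs_nonneg _
  have hN0 : 0 ≤ N := by linarith
  have hcoord : 2 * n * (lam * -(s / n)) ^ 2 ≤ (n - 1) * (∑ i, |(G.lapMatrix ℝ *ᵥ x) i|) ^ 2 := by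
    simpa only [lapMatrix_mulVec_sub_const, hk, zero_sub] using
      two_mul_card_mul_sq_le_sq_sum_abs_lapMatrix_mulVec hG hlam.le hgap hcentered k
  have hsq : (|s| * lam) ^ 2 ≤ (√(2 * n * (n - 1)) * N) ^ 2 :=
    calc (|s| * lam) ^ 2 = n / 2 * (2 * n * (lam * -(s / n)) ^ 2) := by
          rw [mul_pow, sq_abs]
          field_simp
      _ ≤ n / 2 * ((n - 1) * (2 * N) ^ 2) := by
          gcongr n / 2 * ?_
          exact hcoord.trans (by gcongr)
      _ = (√(2 * n * (n - 1)) * N) ^ 2 := by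
          rw [mul_pow (√_), Real.sq_sqrt (by positivity)]
          ring
  rw [le_div_iff₀ hlam]
  exact le_of_sq_le_sq hsq (by positivity)

end Laplacian

lemma sqrt_two_mul_mul_sub_one_le {t : ℝ} (ht : 2 ≤ t) : √(2 * t * (t - 1)) ≤ 2 * (t - 1) :=
  Real.sqrt_le_iff.mpr ⟨by linarith, by nlinarith⟩

/-- For a connected vertex-transitive graph `G` on `n ≥ 2` vertices with algebraic
connectivity `λ₂`, the duration `s = ∑ i, x i` of a terminating chip-firing game with
`N` chips satisfies `s ≤ 2 (n-1) N / λ₂`. -/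
theorem chipFiring_duration_vertexTransitive_bound
    {n : ℕ} (hn : 2 ≤ n)
    (G : SimpleGraph (Fin n)) [DecidableRel G.Adj]
    (hG : G.Connected)
    (hvt : ∀ v w : Fin n, ∃ e : G ≃g G, e v = w)
    (lam2 : ℝ) (hl2pos : 0 < lam2)
    (hl2eig : ∃ v : Fin n → ℝ, v ≠ 0 ∧ G.lapMatrix ℝ *ᵥ v = lam2 • v)
    (hl2min : ∀ μ : ℝ, μ ≠ 0 →
      (∃ v : Fin n → ℝ, v ≠ 0 ∧ G.lapMatrix ℝ *ᵥ v = μ • v) → lam2 ≤ μ)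
    (x : Fin n → ℕ) (d : Fin n → ℤ)
    (hLx : G.lapMatrix ℤ *ᵥ (fun i => (x i : ℤ)) = d)
    (k : Fin n) (hk : x k = 0)
    (N : ℝ) (hN0 : 0 ≤ N) (hN : (∑ i, |(d i : ℝ)|) ≤ 2 * N) :
    ((∑ i, x i : ℕ) : ℝ) ≤ 2 * ((n : ℝ) - 1) * N / lam2 := by
  have hd : ∀ i, (G.lapMatrix ℝ *ᵥ fun j => (x j : ℝ)) i = d i := fun i => by
    simpa [hLx] using map_lapMatrix_mulVec G (Int.castRingHom ℝ) (fun j => (x j : ℤ)) i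
  have hs := chipFiring_duration_vertexTransitive_bound_general (x := fun i => (x i : ℝ)) (N := N)
    hG hl2pos hl2min (by simpa using hk) (by simpa only [hd] using hN)
  rw [Fintype.card_fin, ← Nat.cast_sum] at hs
  calc ((∑ i, x i : ℕ) : ℝ) ≤ √(2 * n * (n - 1)) * N / lam2 := (le_abs_self _).trans hs
    _ ≤ 2 * ((n : ℝ) - 1) * N / lam2 := by
        gcongr
        exact sqrt_two_mul_mul_sub_one_le (Nat.ofNat_le_cast.mpr hn)
end

section
/- Let G be a connected simple graph on n ≥ 2 vertices with minimum degree δ, Laplacian L with eigenvalues 0 = λ₁ < λ₂ ≤ … ≤ λ_n, and Moore–Penrose pseudoinverse B of L. Then every diagonal entry of B satisfies B_{ii} ≤ (λ₂ + λ_n·(n−1)/n − d_i)/(λ₂·λ_n), where d_i = deg(i); in particular f = max_i B_{ii} ≤ (λ₂ + λ_n·(n−1)/n − δ)/(λ₂·λ_n). -/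
open Matrix

/-!
The pseudoinverse `B` of the symmetric matrix `L` is symmetric and commutes with `L`. Every
eigenvalue `x` of `L` is `0` or lies in `[λ₂, λ_n]`, so `x (x - λ₂) (λ_n - x) ≥ 0` and hence
`L³ + λ₂ λ_n L ≤ (λ₂ + λ_n) L²` in the Loewner order. Conjugating by `B` turns this into
`λ₂ λ_n B ≤ (λ₂ + λ_n) L B - L`. The orthogonal projection `1 - L B` fixes the all-ones vector, so
its diagonal entries are at least `1/n`. Comparing diagonal entries gives the bound, even with
`λ₂ (n - 1)/n` in place of `λ₂`.
-/

/-- The four Penrose equations, saying that `b` is the Moore–Penrose inverse of `a`. They are stated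
in an arbitrary type with a multiplication and a star; on real matrices the star is the
transpose. -/
structure IsMoorePenroseInverse_s8 {R : Type*} [Mul R] [Star R] (a b : R) : Prop where
  mul_mul_cancel : a * b * a = a
  mul_mul_cancel' : b * a * b = b
  isSelfAdjoint_mul : IsSelfAdjoint (a * b)
  isSelfAdjoint_mul' : IsSelfAdjoint (b * a)

namespace IsMoorePenroseInverse_s8

section Semigroup

variable {R : Type*} [Semigroup R] [StarMul R] {a b c : R}

protected theorem star (h : IsMoorePenroseInverse_s8 a b) :
    IsMoorePenroseInverse_s8 (star a) (star b) where
  mul_mul_cancel := by simp only [← star_mul, ← mul_assoc, h.mul_mul_cancel]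
  mul_mul_cancel' := by simp only [← star_mul, ← mul_assoc, h.mul_mul_cancel']
  isSelfAdjoint_mul := by simpa only [← star_mul, IsSelfAdjoint.star_iff] using h.isSelfAdjoint_mul'
  isSelfAdjoint_mul' := by simpa only [← star_mul, IsSelfAdjoint.star_iff] using h.isSelfAdjoint_mul

theorem mul_eq_mul (hb : IsMoorePenroseInverse_s8 a b) (hc : IsMoorePenroseInverse_s8 a c) :
    a * b = a * c :=
  calc
    a * b = a * c * (a * b) := by rw [← mul_assoc, hc.mul_mul_cancel]
    _ = star (a * b * (a * c)) := by
      rw [star_mul, hb.isSelfAdjoint_mul.star_eq, hc.isSelfAdjoint_mul.star_eq]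
    _ = a * c := by rw [← mul_assoc, hb.mul_mul_cancel, hc.isSelfAdjoint_mul.star_eq]

theorem mul_eq_mul' (hb : IsMoorePenroseInverse_s8 a b) (hc : IsMoorePenroseInverse_s8 a c) :
    b * a = c * a :=
  star_injective (by simpa only [star_mul] using hb.star.mul_eq_mul hc.star)

theorem unique_s8 (hb : IsMoorePenroseInverse_s8 a b) (hc : IsMoorePenroseInverse_s8 a c) : b = c :=
  calc
    b = b * a * b := hb.mul_mul_cancel'.symm
    _ = c * a * c := by rw [hb.mul_eq_mul' hc, mul_assoc, hb.mul_eq_mul hc, ← mul_assoc]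
    _ = c := hc.mul_mul_cancel'

protected theorem isSelfAdjoint (h : IsMoorePenroseInverse_s8 a b) (ha : IsSelfAdjoint a) :
    IsSelfAdjoint b :=
  (ha.star_eq ▸ h.star).unique_s8 h

theorem commute (h : IsMoorePenroseInverse_s8 a b) (ha : IsSelfAdjoint a) : Commute a b :=
  (ha.commute_iff (h.isSelfAdjoint ha)).mpr h.isSelfAdjoint_mul

theorem isStarProjection_mul (h : IsMoorePenroseInverse_s8 a b) : IsStarProjection (a * b) where
  isIdempotentElem := by rw [IsIdempotentElem, ← mul_assoc, h.mul_mul_cancel]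
  isSelfAdjoint := h.isSelfAdjoint_mul

end Semigroup

end IsMoorePenroseInverse_s8

section Loewner

variable {A : Type*} [Ring A] [StarRing A] [TopologicalSpace A] [Algebra ℝ A] [PartialOrder A]
  [StarOrderedRing A] [ContinuousFunctionalCalculus ℝ A IsSelfAdjoint] {a b : A} {α β : ℝ}

open Polynomial in
theorem pow_three_add_smul_le_of_spectrum_subset (ha : IsSelfAdjoint a) (hα : 0 ≤ α)
    (hspec : spectrum ℝ a \ {0} ⊆ Set.Icc α β) :
    a ^ 3 + (α * β) • a ≤ (α + β) • a ^ 2 := by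
  have hcfc : cfc (X ^ 3 + (α * β) • X : ℝ[X]).eval a ≤ cfc ((α + β) • X ^ 2 : ℝ[X]).eval a := by
    refine cfc_mono fun x hx ↦ ?_
    simp only [eval_add, eval_pow, eval_smul, eval_X, smul_eq_mul]
    rcases eq_or_ne x 0 with rfl | hx0
    · simp
    · obtain ⟨hαx, hxβ⟩ := hspec ⟨hx, hx0⟩
      have hcubic : 0 ≤ x * (x - α) * (β - x) :=
        mul_nonneg (mul_nonneg (hα.trans hαx) (sub_nonneg.mpr hαx)) (sub_nonneg.mpr hxβ)
      linarith
  rw [cfc_polynomial _ a ha, cfc_polynomial _ a ha] at hcfc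
  simpa only [map_add, map_smul, map_pow, aeval_X] using hcfc

theorem IsMoorePenroseInverse_s8.smul_le (h : IsMoorePenroseInverse_s8 a b) (ha : IsSelfAdjoint a)
    (hα : 0 ≤ α) (hspec : spectrum ℝ a \ {0} ⊆ Set.Icc α β) :
    (α * β) • b ≤ (α + β) • (a * b) - a := by
  have hab : a * b = b * a := h.commute ha
  have hsq : b * a ^ 2 * b = a * b :=
    calc
      b * a ^ 2 * b = (b * a) * (a * b) := by simp only [sq, mul_assoc]
      _ = a * b := by rw [← hab, h.isStarProjection_mul.isIdempotentElem]
  have hcube : b * a ^ 3 * b = a :=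
    calc
      b * a ^ 3 * b = (b * a) * a * (a * b) := by
        simp only [pow_succ, pow_zero, one_mul, mul_assoc]
      _ = a := by rw [← hab, h.mul_mul_cancel, hab, ← mul_assoc, h.mul_mul_cancel]
  have hconj : b * (a ^ 3 + (α * β) • a) * b ≤ b * ((α + β) • a ^ 2) * b :=
    (h.isSelfAdjoint ha).conjugate_le_conjugate
      (pow_three_add_smul_le_of_spectrum_subset ha hα hspec)
  simp only [mul_add, add_mul, mul_smul_comm, smul_mul_assoc, hsq, hcube,
    h.mul_mul_cancel'] at hconj
  exact le_sub_iff_add_le'.mpr hconj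

end Loewner

theorem add_mul_sub_one_div_le {K : Type*} [Field K] [LinearOrder K] [IsStrictOrderedRing K]
    {a b : K} (ha : 0 ≤ a) (n : ℕ) :
    (a + b) * ((n : K) - 1) / n ≤ a + b * ((n : K) - 1) / n := by
  have hfrac : ((n : K) - 1) / n ≤ 1 := div_le_one_of_le₀ (by linarith) n.cast_nonneg
  rw [add_mul, add_div, mul_div_assoc a]
  gcongr
  exact mul_le_of_le_one_right ha hfrac

section Diagonal

variable {V : Type*} [Fintype V]

theorem sq_apply_le_of_isStarProjection {R : Type*} [CommRing R] [LinearOrder R]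
    [IsStrictOrderedRing R] [StarRing R] [TrivialStar R] {P : Matrix V V R}
    (hP : IsStarProjection P) {v : V → R} (hv : P *ᵥ v = v) (i : V) :
    v i ^ 2 ≤ P i i * (v ⬝ᵥ v) := by
  have hrow : ∑ j, P i j ^ 2 = P i i := by
    have hPP : P * Pᵀ = P := by
      rw [← conjTranspose_eq_transpose_of_trivial, ← star_eq_conjTranspose,
        hP.isSelfAdjoint.star_eq, hP.isIdempotentElem]
    simpa only [mul_apply, transpose_apply, ← sq] using congr_fun₂ hPP i i
  calc
    v i ^ 2 = (∑ j, P i j * v j) ^ 2 := congr_arg (· ^ 2) (congr_fun hv i).symm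
    _ ≤ (∑ j, P i j ^ 2) * ∑ j, v j ^ 2 := Finset.sum_mul_sq_le_sq_mul_sq _ _ _
    _ = P i i * (v ⬝ᵥ v) := by rw [hrow]; simp only [dotProduct, sq]

theorem apply_self_le_of_isStarProjection_of_mulVec_one_eq_zero {K : Type*} [Field K]
    [LinearOrder K] [IsStrictOrderedRing K] [StarRing K] [TrivialStar K] {P : Matrix V V K}
    (hP : IsStarProjection P) (hone : P *ᵥ 1 = 0) (i : V) :
    P i i ≤ ((Fintype.card V : K) - 1) / Fintype.card V := by
  classical
  have hcard : (0 : K) < Fintype.card V := by exact_mod_cast Fintype.card_pos_iff.mpr ⟨i⟩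
  have hfix : (1 - P) *ᵥ 1 = 1 := by rw [sub_mulVec, one_mulVec, hone, sub_zero]
  have hsq := sq_apply_le_of_isStarProjection hP.one_sub hfix i
  simp only [Pi.one_apply, one_pow, Matrix.sub_apply, one_apply_eq, one_dotProduct_one] at hsq
  rw [le_div_iff₀ hcard]
  linarith

variable [DecidableEq V]

theorem exists_mulVec_eq_smul_of_mem_spectrum {K : Type*} [Field K] {M : Matrix V V K} {μ : K}
    (hμ : μ ∈ spectrum K M) : ∃ v : V → K, v ≠ 0 ∧ M *ᵥ v = μ • v := by
  rw [← spectrum_toLin', ← Module.End.hasEigenvalue_iff_mem_spectrum] at hμ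
  obtain ⟨v, hv⟩ := hμ.exists_hasEigenvector
  exact ⟨v, hv.2, hv.apply_eq_smul⟩

theorem spectrum_diff_zero_subset_Icc {K : Type*} [Field K] [Preorder K] {M : Matrix V V K}
    {α β : K} (hα : ∀ μ, μ ≠ 0 → (∃ v : V → K, v ≠ 0 ∧ M *ᵥ v = μ • v) → α ≤ μ)
    (hβ : ∀ μ, (∃ v : V → K, v ≠ 0 ∧ M *ᵥ v = μ • v) → μ ≤ β) :
    spectrum K M \ {0} ⊆ Set.Icc α β := fun μ ⟨hμ, hμ0⟩ ↦
  have hv := exists_mulVec_eq_smul_of_mem_spectrum hμ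
  ⟨hα μ hμ0 hv, hβ μ hv⟩

open scoped MatrixOrder in
theorem IsMoorePenroseInverse_s8.apply_self_le {L B : Matrix V V ℝ} (h : IsMoorePenroseInverse_s8 L B)
    (hL : IsSelfAdjoint L) (hone : L *ᵥ 1 = 0) {α β : ℝ} (hα : 0 < α) (hβ : 0 < β)
    (hspec : spectrum ℝ L \ {0} ⊆ Set.Icc α β) (i : V) :
    B i i ≤ ((α + β) * ((Fintype.card V : ℝ) - 1) / Fintype.card V - L i i) / (α * β) := by
  have hloewner : α * β * B i i ≤ (α + β) * (L * B) i i - L i i :=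
    sub_nonneg.mp (le_iff.mp (h.smul_le hL hα.le hspec)).diag_nonneg
  have hLB : (L * B) *ᵥ 1 = 0 := by
    rw [(h.commute hL).eq, ← mulVec_mulVec, hone, mulVec_zero]
  rw [le_div_iff₀' (mul_pos hα hβ), mul_div_assoc]
  refine hloewner.trans ?_
  gcongr
  exact apply_self_le_of_isStarProjection_of_mulVec_one_eq_zero h.isStarProjection_mul hLB i

theorem lapMatrix_pinv_diag_le_of_eigenvalue_bounds_general (G : SimpleGraph V) [DecidableRel G.Adj]
    {B : Matrix V V ℝ} (hB : IsMoorePenroseInverse_s8 (G.lapMatrix ℝ) B) {α β : ℝ} (hα : 0 < α)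
    (hβ : 0 < β) (hspec : spectrum ℝ (G.lapMatrix ℝ) \ {0} ⊆ Set.Icc α β) (i : V) :
    B i i ≤ ((α + β) * ((Fintype.card V : ℝ) - 1) / Fintype.card V - G.degree i) / (α * β) := by
  have hdeg : G.lapMatrix ℝ i i = G.degree i := by
    simp [SimpleGraph.lapMatrix, SimpleGraph.degMatrix]
  simpa only [hdeg] using
    hB.apply_self_le (G.isHermitian_lapMatrix ℝ) G.lapMatrix_mulVec_const_eq_zero hα hβ hspec i

end Diagonal

/-- For a connected graph on `n ≥ 2` vertices with minimum degree `δ` and Laplacian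
eigenvalues `0 = λ₁ < λ₂ ≤ … ≤ λ_n`, every diagonal entry of the Moore–Penrose
pseudoinverse `B` of the Laplacian satisfies
`B i i ≤ (λ₂ + λ_n (n-1)/n - deg i)/(λ₂ λ_n)`; in particular
`f = max_i B i i ≤ (λ₂ + λ_n (n-1)/n - δ)/(λ₂ λ_n)`. -/
theorem lapMatrix_pinv_diag_le_of_eigenvalue_bounds
    {n : ℕ} (hn : 2 ≤ n)
    (G : SimpleGraph (Fin n)) [DecidableRel G.Adj]
    (hG : G.Connected)
    (B : Matrix (Fin n) (Fin n) ℝ)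
    (hB1 : G.lapMatrix ℝ * B * G.lapMatrix ℝ = G.lapMatrix ℝ)
    (hB2 : B * G.lapMatrix ℝ * B = B)
    (hB3 : (G.lapMatrix ℝ * B)ᵀ = G.lapMatrix ℝ * B)
    (hB4 : (B * G.lapMatrix ℝ)ᵀ = B * G.lapMatrix ℝ)
    (lam2 : ℝ) (hl2pos : 0 < lam2)
    (hl2eig : ∃ v : Fin n → ℝ, v ≠ 0 ∧ G.lapMatrix ℝ *ᵥ v = lam2 • v)
    (hl2min : ∀ μ : ℝ, μ ≠ 0 →
      (∃ v : Fin n → ℝ, v ≠ 0 ∧ G.lapMatrix ℝ *ᵥ v = μ • v) → lam2 ≤ μ)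
    (lamn : ℝ)
    (hlneig : ∃ v : Fin n → ℝ, v ≠ 0 ∧ G.lapMatrix ℝ *ᵥ v = lamn • v)
    (hlnmax : ∀ μ : ℝ,
      (∃ v : Fin n → ℝ, v ≠ 0 ∧ G.lapMatrix ℝ *ᵥ v = μ • v) → μ ≤ lamn) :
    (∀ i, B i i ≤ (lam2 + lamn * ((n : ℝ) - 1) / n - (G.degree i : ℝ)) / (lam2 * lamn)) ∧
    (∀ i, B i i ≤ (lam2 + lamn * ((n : ℝ) - 1) / n - (G.minDegree : ℝ)) / (lam2 * lamn)) := by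
  have hlamn : 0 < lamn := hl2pos.trans_le (hlnmax lam2 hl2eig)
  have hsharp := lapMatrix_pinv_diag_le_of_eigenvalue_bounds_general G ⟨hB1, hB2, hB3, hB4⟩
    hl2pos hlamn (spectrum_diff_zero_subset_Icc hl2min hlnmax)
  rw [Fintype.card_fin] at hsharp
  have hweak := add_mul_sub_one_div_le (b := lamn) hl2pos.le n
  exact ⟨fun i ↦ (hsharp i).trans (by gcongr),
    fun i ↦ (hsharp i).trans (by gcongr; exact G.minDegree_le_degree i)⟩
end

section
/- Let G be a connected strongly regular graph with parameters (n, k, a, c), not complete (so c ≥ 1), with Laplacian L and Moore–Penrose pseudoinverse B of L. Then o = max_{i≠j} |B_{ij}| ≤ 2/(n·c). -/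
open Matrix

/-!
Let `P` be the orthogonal projection onto the vectors with zero sum, and let `s = 2k - a + c`.
Strong regularity says that the Laplacian satisfies `L² = s L - n c P`, and `P L = L = L P`, so
`(n c)⁻¹ (s P - L)` inverts `L` on the range of `P`, which makes it the Moore–Penrose inverse. Its
off-diagonal entries are `(A i j - s / n) / (n c)` with `A` the adjacency matrix, and `0 ≤ s ≤ 2 n`.
-/

/-- `y` is a Moore–Penrose inverse of `x`: the four Penrose equations, stated in any set with a
multiplication and a star. For real square matrices the star is the transpose. -/
structure IsMoorePenroseInverse_s18 {R : Type*} [Mul R] [Star R] (x y : R) : Prop where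
  mul_mul_left : x * y * x = x
  mul_mul_right : y * x * y = y
  isSelfAdjoint_left : IsSelfAdjoint (x * y)
  isSelfAdjoint_right : IsSelfAdjoint (y * x)

namespace IsMoorePenroseInverse_s18

theorem unique_s18 {R : Type*} [Semigroup R] [StarMul R] {x y z : R}
    (hy : IsMoorePenroseInverse_s18 x y) (hz : IsMoorePenroseInverse_s18 x z) : y = z := by
  have hleft : x * y = x * z := by
    calc x * y = star (x * z * (x * y)) := by
          rw [← mul_assoc, hz.mul_mul_left, hy.isSelfAdjoint_left.star_eq]
      _ = x * y * (x * z) := by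
          rw [star_mul, hy.isSelfAdjoint_left.star_eq, hz.isSelfAdjoint_left.star_eq]
      _ = x * z := by rw [← mul_assoc, hy.mul_mul_left]
  have hright : y * x = z * x := by
    calc y * x = star (y * x * (z * x)) := by
          rw [mul_assoc, ← mul_assoc x, hz.mul_mul_left, hy.isSelfAdjoint_right.star_eq]
      _ = z * x * (y * x) := by
          rw [star_mul, hy.isSelfAdjoint_right.star_eq, hz.isSelfAdjoint_right.star_eq]
      _ = z * x := by rw [mul_assoc, ← mul_assoc x, hy.mul_mul_left]
  calc y = y * x * y := hy.mul_mul_right.symm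
    _ = z * x * z := by rw [hright, mul_assoc, hleft, ← mul_assoc]
    _ = z := hz.mul_mul_right

theorem of_mul_eq {R : Type*} [Mul R] [Star R] {p x y : R} (hp : IsSelfAdjoint p)
    (hxy : x * y = p) (hyx : y * x = p) (hpx : p * x = x) (hpy : p * y = y) :
    IsMoorePenroseInverse_s18 x y where
  mul_mul_left := by rw [hxy, hpx]
  mul_mul_right := by rw [hyx, hpy]
  isSelfAdjoint_left := hxy ▸ hp
  isSelfAdjoint_right := hyx ▸ hp

theorem of_mul_self_eq {K R : Type*} [Field K] [Ring R] [Star R] [Algebra K R] {p x : R}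
    {s t : K} (hp : IsStarProjection p) (hpx : p * x = x) (hxp : x * p = x) (ht : t ≠ 0)
    (hx : x * x = s • x - t • p) : IsMoorePenroseInverse_s18 x (t⁻¹ • (s • p - x)) := by
  have hxx : s • x - x * x = t • p := by rw [hx, sub_sub_cancel]
  refine of_mul_eq hp.isSelfAdjoint ?_ ?_ hpx ?_
  · rw [mul_smul_comm, mul_sub, mul_smul_comm, hxp, hxx, inv_smul_smul₀ ht]
  · rw [smul_mul_assoc, sub_mul, smul_mul_assoc, hpx, hxx, inv_smul_smul₀ ht]
  · rw [mul_smul_comm, mul_sub, mul_smul_comm, hp.isIdempotentElem.eq, hpx]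

end IsMoorePenroseInverse_s18

section Centering

variable {V K : Type*} [Fintype V] [DecidableEq V] [Field K]

variable (V K) in
/-- The centering matrix `I - J / |V|`, with `J` the all-ones matrix `vecMulVec 1 1`: the orthogonal
projection onto the vectors whose entries sum to zero. -/
def centeringMatrix : Matrix V V K :=
  1 - (Fintype.card V : K)⁻¹ • vecMulVec 1 1

theorem isStarProjection_centeringMatrix [StarRing K] [CharZero K] [Nonempty V] :
    IsStarProjection (centeringMatrix V K) := by
  refine IsStarProjection.one_sub ⟨?_, ?_⟩
  · have hV : (Fintype.card V : K) ≠ 0 := Nat.cast_ne_zero.2 Fintype.card_ne_zero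
    rw [IsIdempotentElem, smul_mul_smul_comm, vecMulVec_mul_vecMulVec, one_dotProduct_one,
      vecMulVec_smul, smul_smul, inv_mul_cancel_right₀ hV]
  · ext i j
    simp

theorem mul_centeringMatrix_of_mulVec_one {M : Matrix V V K} (hM : M *ᵥ 1 = 0) :
    M * centeringMatrix V K = M := by
  rw [centeringMatrix, mul_sub, mul_one, mul_smul_comm, mul_vecMulVec, hM, zero_vecMulVec,
    smul_zero, sub_zero]

theorem centeringMatrix_mul_of_one_vecMul {M : Matrix V V K} (hM : 1 ᵥ* M = 0) :
    centeringMatrix V K * M = M := by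
  rw [centeringMatrix, sub_mul, one_mul, smul_mul_assoc, vecMulVec_mul, hM, vecMulVec_zero,
    smul_zero, sub_zero]

end Centering

theorem exists_adj_adj_not_adj_of_connected {V : Type*} {G : SimpleGraph V} (hG : G.Connected)
    (hnc : G ≠ ⊤) : ∃ u w v, G.Adj u w ∧ G.Adj w v ∧ ¬G.Adj u v ∧ u ≠ v := by
  obtain ⟨u, v, huv, hadj⟩ := SimpleGraph.ne_top_iff_exists_not_adj.1 hnc
  obtain ⟨p, hp⟩ := hG.exists_walk_length_eq_dist u v
  exact p.exists_adj_adj_not_adj_ne hp (p.reachable.one_lt_dist_of_ne_of_not_adj huv hadj)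

theorem adjMatrix_compl_eq {V R : Type*} [DecidableEq V] [NonAssocRing R] (G : SimpleGraph V)
    [DecidableRel G.Adj] : Gᶜ.adjMatrix R = vecMulVec 1 1 - 1 - G.adjMatrix R := by
  refine eq_sub_of_add_eq' ?_
  rw [SimpleGraph.IsCompl.adjMatrix_add_adjMatrix_eq_adjMatrix_completeGraph R isCompl_compl,
    SimpleGraph.adjMatrix_completeGraph_eq_of_one_sub_one]
  ext i j
  simp

section StronglyRegular

variable {V : Type*} [Fintype V] {G : SimpleGraph V} [DecidableRel G.Adj] {n k a c : ℕ}

theorem pos_of_isSRGWith_of_connected (h : G.IsSRGWith n k a c) (hG : G.Connected)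
    (hnc : G ≠ ⊤) : 0 < c := by
  obtain ⟨u, w, v, huw, hwv, hadj, huv⟩ := exists_adj_adj_not_adj_of_connected hG hnc
  rw [← h.of_not_adj huv hadj]
  exact Fintype.card_pos_iff.2 ⟨w, huw, hwv.symm⟩

theorem le_degree_of_isSRGWith_of_adj (h : G.IsSRGWith n k a c) {u v : V} (huv : G.Adj u v) :
    a ≤ k := by
  rw [← h.of_adj u v huv, ← h.regular.degree_eq u]
  exact G.card_commonNeighbors_le_degree_left u v

theorem le_degree_of_isSRGWith_of_not_adj (h : G.IsSRGWith n k a c) {u v : V} (hne : u ≠ v)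
    (huv : ¬G.Adj u v) : c ≤ k := by
  rw [← h.of_not_adj hne huv, ← h.regular.degree_eq u]
  exact G.card_commonNeighbors_le_degree_left u v

theorem degree_lt_of_isSRGWith [Nonempty V] (h : G.IsSRGWith n k a c) : k < n := by
  obtain ⟨v⟩ := ‹Nonempty V›
  rw [← h.card, ← h.regular.degree_eq v]
  exact G.degree_lt_card_verts v

theorem two_mul_degree_le_of_isSRGWith_of_adj (h : G.IsSRGWith n k a c) {u v : V}
    (huv : G.Adj u v) : 2 * k ≤ n + a := by
  classical
  have hunion : 2 * k - a ≤ n := by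
    rw [← h.card_neighborFinset_union_of_adj huv, ← h.card]
    exact Finset.card_le_univ _
  omega

variable [DecidableEq V]

theorem lapMatrix_eq_of_isRegularOfDegree {R : Type*} [Ring R]
    (h : G.IsRegularOfDegree k) : G.lapMatrix R = (k : R) • 1 - G.adjMatrix R := by
  simp only [SimpleGraph.lapMatrix, SimpleGraph.degMatrix, h.degree_eq, smul_one_eq_diagonal]

theorem lapMatrix_mul_self_of_isSRGWith {R : Type*} [CommRing R] (h : G.IsSRGWith n k a c) :
    G.lapMatrix R * G.lapMatrix R = (2 * k - a + c : R) • G.lapMatrix R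
      - (n * c : R) • 1 + (c : R) • vecMulVec 1 1 := by
  obtain ⟨t, hLL⟩ : ∃ t : R, G.lapMatrix R * G.lapMatrix R =
      (2 * k - a + c : R) • G.lapMatrix R + t • 1 + (c : R) • vecMulVec 1 1 := by
    have hA := h.matrix_eq (α := R)
    rw [adjMatrix_compl_eq, sq] at hA
    refine ⟨k - c + a * k - c * k - k ^ 2, ?_⟩
    rw [lapMatrix_eq_of_isRegularOfDegree h.regular, sub_mul, mul_sub, mul_sub, hA]
    simp only [smul_mul_assoc, mul_smul_comm, one_mul, mul_one]
    module
  -- Evaluating at the all-ones vector determines `t` and so avoids the truncated subtractions in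
  -- the parameter identity `k (k - a - 1) = (n - k - 1) c`.
  have ht (v : V) : t = -(n * c) := by
    have hL : G.lapMatrix R *ᵥ 1 = 0 := G.lapMatrix_mulVec_const_eq_zero
    have hJ : vecMulVec 1 1 *ᵥ (1 : V → R) = (n : R) • (1 : V → R) := by
      rw [vecMulVec_mulVec, one_dotProduct_one, h.card, op_smul_eq_smul]
    have hv := congrFun (congrArg (· *ᵥ (1 : V → R)) hLL) v
    simp only [← mulVec_mulVec, add_mulVec, smul_mulVec, one_mulVec, mulVec_zero, hL, hJ,
      smul_zero, zero_add, Pi.add_apply, Pi.zero_apply, Pi.smul_apply, Pi.one_apply, smul_eq_mul,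
      mul_one] at hv
    linear_combination -hv
  rw [hLL]
  ext i j
  rw [ht i, neg_smul, ← sub_eq_add_neg]

theorem isMoorePenroseInverse_lapMatrix_of_isSRGWith {K : Type*} [Field K] [CharZero K]
    [StarRing K] [Nonempty V] (h : G.IsSRGWith n k a c) (hc : 0 < c) :
    IsMoorePenroseInverse_s18 (G.lapMatrix K)
      ((n * c : K)⁻¹ • ((2 * k - a + c : K) • centeringMatrix V K - G.lapMatrix K)) := by
  have hnK : (n : K) ≠ 0 := Nat.cast_ne_zero.2 (h.card ▸ Fintype.card_ne_zero)
  have hcK : (c : K) ≠ 0 := Nat.cast_ne_zero.2 hc.ne'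
  have hL : G.lapMatrix K *ᵥ 1 = 0 := G.lapMatrix_mulVec_const_eq_zero
  have hL' : 1 ᵥ* G.lapMatrix K = 0 := by
    rw [← mulVec_transpose, (G.isSymm_lapMatrix (R := K)).eq, hL]
  refine .of_mul_self_eq isStarProjection_centeringMatrix
    (centeringMatrix_mul_of_one_vecMul hL') (mul_centeringMatrix_of_mulVec_one hL)
    (mul_ne_zero hnK hcK) ?_
  have hJ : (n * c : K) * (n : K)⁻¹ = c := by field_simp
  rw [lapMatrix_mul_self_of_isSRGWith h, centeringMatrix, h.card, smul_sub, smul_smul, hJ]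
  abel

theorem IsMoorePenroseInverse_s18.lapMatrix_apply_of_isSRGWith {K : Type*} [Field K] [CharZero K]
    [StarRing K] {B : Matrix V V K} (hB : IsMoorePenroseInverse_s18 (G.lapMatrix K) B)
    (h : G.IsSRGWith n k a c) (hc : 0 < c) {i j : V} (hij : i ≠ j) :
    B i j = (G.adjMatrix K i j - (2 * k - a + c) / n) / (n * c) := by
  have : Nonempty V := ⟨i⟩
  rw [hB.unique_s18 (isMoorePenroseInverse_lapMatrix_of_isSRGWith h hc),
    lapMatrix_eq_of_isRegularOfDegree h.regular, centeringMatrix, h.card]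
  simp only [Matrix.smul_apply, Matrix.sub_apply, one_apply_ne hij, vecMulVec_apply, Pi.one_apply,
    smul_eq_mul]
  ring

theorem IsMoorePenroseInverse_s18.abs_lapMatrix_apply_le_of_isSRGWith {B : Matrix V V ℝ}
    (hB : IsMoorePenroseInverse_s18 (G.lapMatrix ℝ) B) (h : G.IsSRGWith n k a c)
    (hG : G.Connected) (hnc : G ≠ ⊤) {i j : V} (hij : i ≠ j) : |B i j| ≤ 2 / (n * c) := by
  have : Nonempty V := ⟨i⟩
  obtain ⟨u, w, v, huw, -, hadj, huv⟩ := exists_adj_adj_not_adj_of_connected hG hnc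
  have hak : (a : ℝ) ≤ k := mod_cast le_degree_of_isSRGWith_of_adj h huw
  have hck : (c : ℝ) ≤ k := mod_cast le_degree_of_isSRGWith_of_not_adj h huv hadj
  have hkn : (k : ℝ) < n := mod_cast degree_lt_of_isSRGWith h
  have hkna : (2 * k : ℝ) ≤ n + a := mod_cast two_mul_degree_le_of_isSRGWith_of_adj h huw
  have hn : (0 : ℝ) < n := k.cast_nonneg.trans_lt hkn
  have hs_nonneg : (0 : ℝ) ≤ (2 * k - a + c) / n :=
    div_nonneg (by linarith [c.cast_nonneg (α := ℝ)]) hn.le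
  have hs_le : (2 * k - a + c : ℝ) / n ≤ 2 := (div_le_iff₀ hn).2 (by linarith)
  rw [hB.lapMatrix_apply_of_isSRGWith h (pos_of_isSRGWith_of_connected h hG hnc) hij, abs_div,
    abs_of_nonneg (by positivity : (0 : ℝ) ≤ n * c)]
  gcongr
  rw [SimpleGraph.adjMatrix_apply, abs_le]
  split_ifs <;> constructor <;> linarith

end StronglyRegular

/-- For a connected, non-complete strongly regular graph with parameters `(n, k, a, c)`,
the largest absolute value `o` of an off-diagonal entry of the Moore–Penrose
pseudoinverse `B` of the Laplacian satisfies `o ≤ 2/(n c)`. -/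
theorem srg_lapMatrix_pinv_offdiag_max_le
    {V : Type*} [Fintype V] [DecidableEq V]
    (G : SimpleGraph V) [DecidableRel G.Adj]
    {n k a c : ℕ}
    (hsrg : G.IsSRGWith n k a c)
    (hG : G.Connected)
    (hnc : G ≠ ⊤)
    (B : Matrix V V ℝ)
    (hB1 : G.lapMatrix ℝ * B * G.lapMatrix ℝ = G.lapMatrix ℝ)
    (hB2 : B * G.lapMatrix ℝ * B = B)
    (hB3 : (G.lapMatrix ℝ * B)ᵀ = G.lapMatrix ℝ * B)
    (hB4 : (B * G.lapMatrix ℝ)ᵀ = B * G.lapMatrix ℝ)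
    (o : ℝ)
    (ho : IsGreatest {r : ℝ | ∃ i j : V, i ≠ j ∧ |B i j| = r} o) :
    o ≤ 2 / ((n : ℝ) * c) := by
  have hB : IsMoorePenroseInverse_s18 (G.lapMatrix ℝ) B := ⟨hB1, hB2, hB3, hB4⟩
  obtain ⟨i, j, hij, rfl⟩ := ho.1
  exact hB.abs_lapMatrix_apply_le_of_isSRGWith hsrg hG hnc hij
end
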